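/- Let $(Z,\mathcal A)$ be a measurable space, $\mu$ a probability measure on $Z$, $\mu^n$ its $n$-fold product on $Z^n$, $\Theta$ a nonempty set, $M\ge 0$, and $\varphi:\Theta\times Z\to\mathbb R$ such that $z\mapsto\varphi(\theta,z)$ is measurable and bounded for each $\theta\in\Theta$, and $|\varphi(\theta,z)-\varphi(\theta,z')|\le M$ for all $\theta\in\Theta$ and $z,z'\in Z$. Fix integers $1\le q\le s\le n$ and put $$\gamma_j:=\binom{n}{s}^{-1}\sum_{l=0}^{q-1}\binom{j-1}{l}\binom{n-j}{s-l-1}\qquad(j=1,\dots,n),$$ where $\binom ab=0$ for $b>a$. For $D=(z_1,\dots,z_n)\in Z^n$ and $\theta\in\Theta$, order the indices $\{1,\dots,n\}$ as $(1),\dots,(n)$ so that $\varphi(\theta,z_{(1)})\ge\cdots\ge\varphi(\theta,z_{(n)})$ (ties broken by index order), define the ordered empirical loss $L_q(\theta;D):=\frac1q\sum_{j=1}^n\gamma_j\,\varphi(\theta,z_{(j)})$, and set $r_i(\theta;D):=\gamma_j$ for the unique $j$ with $(j)=i$. Define the Rademacher complexity $$R_n(\Theta):=\int_{Z^n}\Big[2^{-n}\sum_{\xi\in\{-1,1\}^n}\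 \sup_{\theta\in\Theta}\frac1n\sum_{i=1}^n\xi_i\,\varphi(\theta,z_i)\Big]\,d\mu^n(D)$$ and $$Q_n(\Theta;s,q):=\int_{Z^n}\Big[\inf_{\theta\in\Theta}\sum_{i=1}^n\Big(\frac{r_i(\theta;D)}{q}-\frac1n\Big)\varphi(\theta,z_i)\Big]\,d\mu^n(D).$$ Assume that, for every $\xi\in\{-1,1\}^n$, the function $D\mapsto\sup_{\theta\in\Theta}\frac1n\sum_{i=1}^n\xi_i\,\varphi(\theta,z_i)$ is finite $\mu^n$-almost everywhere, $\mu^n$-measurable and integrable, and that the integrand of $Q_n$ and the function $D\mapsto\sup_{\theta\in\Theta}\big(\int_Z\varphi(\theta,z)\,d\mu(z)-L_q(\theta;D)\big)$ are $\mu^n$-measurable and integrable. Then $Q_n(\Theta;s,q)\ge 0$, and for every $\delta\in(0,1)$, with $\mu^n$-probability at least $1-\delta$ over the draw of $D=(z_1,\dots,z_n)$, for all $\theta\in\Theta$: $$\int_Z\varphi(\theta,z)\,d\mu(z)\ \le\ L_q(\theta;D)+2R_n(\Theta)+\frac{Ms}{q}\sqrt{\frac{\ln(1/\delta)}{2n}}-Q_n(\Theta;s,q).$$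 (This is a generalization bound for ordered SGD, with $\varphi(\theta,z)$ playing the role of the loss $\ell(f(x;\theta),y)$ of the model on the sample $z=(x,y)$.) -/

import Mathlib

open MeasureTheory

noncomputable section

namespace OrderedLoss

/-- The coefficient `γ_j = (∑_{l=0}^{q-1} C(j-1, l) · C(n-j, s-l-1)) / C(n, s)`, for
`1 ≤ j ≤ n` and `1 ≤ q ≤ s ≤ n` (then no subtraction below is truncated). -/
def gamma (n s q j : ℕ) : ℝ :=
  (∑ l ∈ Finset.range q, ((j - 1).choose l : ℝ) * ((n - j).choose (s - l - 1) : ℝ))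
    / (n.choose s : ℝ)

variable {Z Θ : Type*} {n : ℕ}

/-- The permutation `j ↦ (j)` that lists the sample indices by decreasing loss, ties being broken
by index order. Positions and indices are counted from `0`, so `orderPerm φ θ D j` is the
index at the `(j+1)`-st place. (`Tuple.sort` sorts increasingly, with ties broken by index.) -/
def orderPerm (φ : Θ → Z → ℝ) (θ : Θ) (D : Fin n → Z) : Equiv.Perm (Fin n) :=
  Tuple.sort fun i => -φ θ (D i)

/-- The losses are listed in decreasing order. -/
theorem orderPerm_antitone (φ : Θ → Z → ℝ) (θ : Θ) (D : Fin n → Z) :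
    Antitone fun j => φ θ (D (orderPerm φ θ D j)) := fun _ _ h =>
  neg_le_neg_iff.1 (Tuple.monotone_sort (fun i => -φ θ (D i)) h)

/-- Among equal losses the smaller index comes first. -/
theorem orderPerm_lt_of_eq (φ : Θ → Z → ℝ) (θ : Θ) (D : Fin n → Z) {j k : Fin n} (hjk : j < k)
    (h : φ θ (D (orderPerm φ θ D j)) = φ θ (D (orderPerm φ θ D k))) :
    orderPerm φ θ D j < orderPerm φ θ D k :=
  (Tuple.eq_sort_iff.1 (rfl : orderPerm φ θ D = Tuple.sort fun i => -φ θ (D i))).2 j k hjk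
    (congrArg Neg.neg h)

/-- The ordered empirical loss `L_q(θ; D) = (1/q) ∑_j γ_j φ(θ, z_{(j)})`. -/
def orderedLoss (φ : Θ → Z → ℝ) (s q : ℕ) (θ : Θ) (D : Fin n → Z) : ℝ :=
  (1 / (q : ℝ)) * ∑ j : Fin n, gamma n s q (j + 1) * φ θ (D (orderPerm φ θ D j))

/-- The weight `r_i(θ; D) = γ_j`, where `j` is the place of the index `i`, i.e. `(j) = i`. -/
def rankWeight (φ : Θ → Z → ℝ) (s q : ℕ) (i : Fin n) (θ : Θ) (D : Fin n → Z) : ℝ :=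
  gamma n s q (((orderPerm φ θ D).symm i : ℕ) + 1)

/-- The signed average `(1/n) ∑_i ξ_i φ(θ, z_i)`, with signs `ξ_i ∈ ℤˣ = {-1, 1}`. -/
def signedAverage (φ : Θ → Z → ℝ) (ξ : Fin n → ℤˣ) (D : Fin n → Z) (θ : Θ) : ℝ :=
  (1 / (n : ℝ)) * ∑ i : Fin n, ((ξ i : ℤ) : ℝ) * φ θ (D i)

/-- `inf_θ ∑_i (r_i(θ; D)/q - 1/n) φ(θ, z_i)`, the integrand of `Q_n(Θ; s, q)`. -/
def gapInf (φ : Θ → Z → ℝ) (s q : ℕ) (D : Fin n → Z) : ℝ :=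
  ⨅ θ : Θ, ∑ i : Fin n, (rankWeight φ s q i θ D / (q : ℝ) - 1 / (n : ℝ)) * φ θ (D i)

variable [MeasurableSpace Z]

/-- The Rademacher complexity
`R_n(Θ) = ∫ 2^{-n} ∑_{ξ ∈ {-1,1}ⁿ} sup_θ (1/n) ∑_i ξ_i φ(θ, z_i) dμⁿ(D)`. -/
def rademacherComplexity (μ : Measure Z) (φ : Θ → Z → ℝ) (n : ℕ) : ℝ :=
  ∫ D : Fin n → Z, ((2 : ℝ) ^ n)⁻¹ * ∑ ξ : Fin n → ℤˣ, ⨆ θ : Θ, signedAverage φ ξ D θ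
    ∂(Measure.pi fun _ : Fin n => μ)

/-- `Q_n(Θ; s, q) = ∫ inf_θ ∑_i (r_i(θ; D)/q - 1/n) φ(θ, z_i) dμⁿ(D)`. -/
def gapQ (μ : Measure Z) (φ : Θ → Z → ℝ) (n s q : ℕ) : ℝ :=
  ∫ D : Fin n → Z, gapInf φ s q D ∂(Measure.pi fun _ : Fin n => μ)

end OrderedLoss

end

namespace OrderedLoss

theorem sum_antidiagonal_choose_mul_choose (n a b : ℕ) :
    ∑ ij ∈ Finset.HasAntidiagonal.antidiagonal n, ij.1.choose a * ij.2.choose b = (n + 1).choose (a + b + 1) := by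
  induction n generalizing b with
  | zero =>
    rcases a with _ | a <;> rcases b with _ | b <;> simp [Nat.choose_eq_zero_of_lt]
  | succ n ih =>
    rw [Finset.Nat.sum_antidiagonal_succ']
    cases b with
    | zero =>
      have := ih 0
      simp only [Nat.choose_zero_right, mul_one] at this ⊢
      rw [this, Nat.choose_succ_succ (n + 1) (a + 0)]
      rfl
    | succ b =>
      simp only [Nat.choose_succ_succ _ b, mul_add, Finset.sum_add_distrib, ih b, ih (b + 1),
        Nat.choose_zero_succ, mul_zero, zero_add]
      rw [← add_assoc a b 1, Nat.choose_succ_succ (n + 1) (a + b + 1)]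

theorem sum_choose_mul_choose_add (m N k d : ℕ) :
    ∑ l ∈ Finset.range (k + 1), (m + 1).choose l * N.choose (k + 1 + d - l) +
        m.choose k * N.choose d =
      ∑ l ∈ Finset.range (k + 1), m.choose l * (N + 1).choose (k + 1 + d - l) := by
  induction k generalizing d with
  | zero =>
    simp only [zero_add, Finset.range_one, Finset.sum_singleton, Nat.choose_zero_right, one_mul,
      Nat.sub_zero]
    rw [add_comm 1 d, Nat.choose_succ_succ, add_comm]
  | succ k ih =>
    rw [Finset.sum_range_succ, Finset.sum_range_succ _ (k + 1)]
    have := ih (d + 1)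
    rw [show k + 1 + (d + 1) = k + 1 + 1 + d by ring] at this
    rw [← this, show k + 1 + 1 + d - (k + 1) = d + 1 by lia, Nat.choose_succ_succ m,
      Nat.choose_succ_succ N]
    simp only [Nat.succ_eq_add_one]
    ring

theorem sum_choose_mul_choose_succ_le (m N k t : ℕ) (hkt : k ≤ t) :
    ∑ l ∈ Finset.range (k + 1), (m + 1).choose l * N.choose (t - l) ≤
      ∑ l ∈ Finset.range (k + 1), m.choose l * (N + 1).choose (t - l) := by
  rcases hkt.lt_or_eq with h | rfl
  · obtain ⟨d, rfl⟩ := Nat.exists_eq_add_of_le (Nat.succ_le_of_lt h)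
    exact le_of_add_le_left (sum_choose_mul_choose_add m N k d).le
  · cases k with
    | zero => simp
    | succ k =>
      rw [Finset.sum_range_succ, Finset.sum_range_succ _ (k + 1)]
      have := sum_choose_mul_choose_add m N k 0
      simp only [add_zero, Nat.choose_zero_right, mul_one] at this
      rw [← this, Nat.choose_succ_succ m]
      simp only [Nat.succ_eq_add_one, Nat.sub_self, Nat.choose_zero_right]
      lia

theorem gamma_nonneg (n s q j : ℕ) : 0 ≤ gamma n s q j := by
  unfold gamma; positivity

theorem sum_gamma {n s q : ℕ} (hqs : q ≤ s) (hsn : s ≤ n) :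
    ∑ j : Fin n, gamma n s q (j + 1) = q := by
  rcases n with _ | n
  · obtain rfl : q = 0 := by lia
    simp
  have hpos : ((n + 1).choose s : ℝ) ≠ 0 := by exact_mod_cast (Nat.choose_pos hsn).ne'
  simp only [gamma]
  rw [← Finset.sum_div, div_eq_iff hpos, Finset.sum_comm]
  rw [Finset.sum_congr rfl (g := fun _ => ((n + 1).choose s : ℝ)), Finset.sum_const,
    Finset.card_range, nsmul_eq_mul]
  intro l hl
  have hl := Finset.mem_range.1 hl
  have h := sum_antidiagonal_choose_mul_choose n l (s - l - 1)
  rw [show l + (s - l - 1) + 1 = s by lia,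
    Finset.Nat.sum_antidiagonal_eq_sum_range_succ (fun i j => i.choose l * j.choose (s - l - 1)),
    ← Fin.sum_univ_eq_sum_range (fun i => i.choose l * (n - i).choose (s - l - 1))] at h
  rw [← h]
  push_cast
  simp

theorem gamma_antitone {n s q : ℕ} (hq : 1 ≤ q) (hqs : q ≤ s) :
    Antitone fun j : Fin n => gamma n s q (j + 1) := by
  rcases n with _ | n
  · exact fun i => i.elim0
  rw [Fin.antitone_iff_succ_le]
  intro i
  have hi := i.2
  have h := sum_choose_mul_choose_succ_le i (n - (i + 1)) (q - 1) (s - 1) (by lia)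
  rw [show q - 1 + 1 = q by lia] at h
  simp only [gamma]
  refine div_le_div_of_nonneg_right ?_ (by positivity)
  have e1 : n + 1 - ((i.succ : ℕ) + 1) = n - (i + 1) := by simp
  have e2 : n + 1 - ((i.castSucc : ℕ) + 1) = n - (i + 1) + 1 := by simp; lia
  rw [e1, e2]
  simp only [Nat.add_sub_cancel, Fin.val_succ, Fin.val_castSucc]
  simp only [Nat.sub_right_comm s _ 1]
  exact_mod_cast h

theorem gamma_one {n s q : ℕ} (hq : 1 ≤ q) (hqs : q ≤ s) (hsn : s ≤ n) :
    gamma n s q 1 = s / n := by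
  have hs : 0 < s := by lia
  obtain ⟨n, rfl⟩ : ∃ m, n = m + 1 := ⟨n - 1, by lia⟩
  obtain ⟨s, rfl⟩ : ∃ m, s = m + 1 := ⟨s - 1, by lia⟩
  obtain ⟨q, rfl⟩ : ∃ m, q = m + 1 := ⟨q - 1, by lia⟩
  have hpos : ((n + 1).choose (s + 1) : ℝ) ≠ 0 := by exact_mod_cast (Nat.choose_pos hsn).ne'
  rw [gamma, Finset.sum_range_succ']
  simp only [Nat.sub_self, Nat.choose_zero_succ, Nat.cast_zero, zero_mul, Finset.sum_const_zero,
    Nat.choose_zero_right, Nat.cast_one, one_mul, zero_add, Nat.add_sub_cancel, Nat.sub_zero]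
  have := Nat.add_one_mul_choose_eq n s
  rw [div_eq_div_iff hpos (by positivity)]
  have h : ((n + 1 : ℕ) : ℝ) * n.choose s = (n + 1).choose (s + 1) * (s + 1 : ℕ) := by
    exact_mod_cast this
  linarith

theorem gamma_le {n s q : ℕ} (hq : 1 ≤ q) (hqs : q ≤ s) (hsn : s ≤ n) (j : Fin n) :
    gamma n s q (j + 1) ≤ s / n := by
  have hn : 0 < n := j.pos
  have := gamma_antitone (n := n) hq hqs (show (⟨0, hn⟩ : Fin n) ≤ j from Nat.zero_le _)
  simpa [gamma_one hq hqs hsn] using this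

variable {Z Θ : Type*} {n : ℕ}

/-- Listing the losses in decreasing order maximizes the sum with antitone weights. -/
theorem sum_mul_perm_le_sum_mul_orderPerm {w : Fin n → ℝ} (hw : Antitone w) (φ : Θ → Z → ℝ)
    (θ : Θ) (D : Fin n → Z) (σ : Equiv.Perm (Fin n)) :
    ∑ j, w j * φ θ (D (σ j)) ≤ ∑ j, w j * φ θ (D (orderPerm φ θ D j)) := by
  have h := (hw.monovary (orderPerm_antitone φ θ D)).sum_mul_comp_perm_le_sum_mul
    (σ := σ.trans (orderPerm φ θ D).symm)
  simpa using h

theorem orderedLoss_sub_le {φ : Θ → Z → ℝ} {M : ℝ} {θ : Θ} {s q : ℕ}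
    (hM : ∀ z z', |φ θ z - φ θ z'| ≤ M) (hq : 1 ≤ q) (hqs : q ≤ s) (hsn : s ≤ n)
    {D D' : Fin n → Z} {i : Fin n} (hD : ∀ j ≠ i, D j = D' j) :
    orderedLoss φ s q θ D - orderedLoss φ s q θ D' ≤ M * s / (q * n) := by
  set σ := orderPerm φ θ D
  have hM0 : 0 ≤ M := (abs_nonneg _).trans (hM (D i) (D i))
  have h1 := sum_mul_perm_le_sum_mul_orderPerm (gamma_antitone (n := n) hq hqs) φ θ D' σ
  have h2 : ∑ j : Fin n, gamma n s q (j + 1) * φ θ (D (σ j)) -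
      ∑ j : Fin n, gamma n s q (j + 1) * φ θ (D' (σ j)) ≤ s / n * M := by
    rw [← Finset.sum_sub_distrib, Finset.sum_eq_single (σ.symm i)]
    · rw [← mul_sub]
      exact (mul_le_mul_of_nonneg_left ((le_abs_self _).trans (hM _ _)) (gamma_nonneg ..)).trans
        (mul_le_mul_of_nonneg_right (gamma_le hq hqs hsn _) hM0)
    · intro j _ hj
      rw [hD (σ j) (fun h => hj (by simp [← h])), sub_self]
    · simp
  unfold orderedLoss
  rw [← mul_sub, show M * s / (q * n) = 1 / (q : ℝ) * (s / n * M) by field_simp]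
  gcongr
  linarith

theorem abs_sub_orderedLoss_le {φ : Θ → Z → ℝ} {M a : ℝ} {θ : Θ} {s q : ℕ}
    (ha : ∀ z, |a - φ θ z| ≤ M) (hq : 1 ≤ q) (hqs : q ≤ s) (hsn : s ≤ n) (D : Fin n → Z) :
    |a - orderedLoss φ s q θ D| ≤ M := by
  have hq0 : (0 : ℝ) < q := by exact_mod_cast hq
  have h : a - orderedLoss φ s q θ D =
      (∑ j : Fin n, gamma n s q (j + 1) * (a - φ θ (D (orderPerm φ θ D j)))) / q := by
    simp only [mul_sub, Finset.sum_sub_distrib, ← Finset.sum_mul, sum_gamma hqs hsn, orderedLoss]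
    field_simp
  rw [h, abs_div, abs_of_pos hq0, div_le_iff₀ hq0]
  refine (Finset.abs_sum_le_sum_abs _ _).trans ?_
  calc _ ≤ ∑ j : Fin n, gamma n s q (j + 1) * M := by
        gcongr with j
        rw [abs_mul, abs_of_nonneg (gamma_nonneg ..)]
        exact mul_le_mul_of_nonneg_left (ha _) (gamma_nonneg ..)
    _ = M * q := by rw [← Finset.sum_mul, sum_gamma hqs hsn, mul_comm]

theorem sum_rankWeight_eq (φ : Θ → Z → ℝ) (s q : ℕ) (θ : Θ) (D : Fin n → Z) :
    ∑ i, (rankWeight φ s q i θ D / (q : ℝ) - 1 / (n : ℝ)) * φ θ (D i) =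
      orderedLoss φ s q θ D - 1 / (n : ℝ) * ∑ i, φ θ (D i) := by
  simp only [sub_mul, Finset.sum_sub_distrib, orderedLoss, Finset.mul_sum]
  congr 1
  rw [← Equiv.sum_comp (orderPerm φ θ D)]
  refine Finset.sum_congr rfl fun j _ => ?_
  simp only [rankWeight, Equiv.symm_apply_apply]
  ring

theorem average_le_orderedLoss {s q : ℕ} (hq : 1 ≤ q) (hqs : q ≤ s) (hsn : s ≤ n)
    (φ : Θ → Z → ℝ) (θ : Θ) (D : Fin n → Z) :
    1 / (n : ℝ) * ∑ i, φ θ (D i) ≤ orderedLoss φ s q θ D := by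
  have hq0 : (0 : ℝ) < q := by exact_mod_cast hq
  have hn0 : (0 : ℝ) < n := by exact_mod_cast (by lia : 0 < n)
  have h := ((gamma_antitone (n := n) hq hqs).monovary
    (orderPerm_antitone φ θ D)).sum_mul_sum_le_card_mul_sum
  rw [sum_gamma hqs hsn, Equiv.sum_comp (orderPerm φ θ D) (fun i => φ θ (D i)),
    Fintype.card_fin] at h
  rw [orderedLoss, one_div_mul_eq_div, one_div_mul_eq_div, div_le_div_iff₀ hn0 hq0]
  linarith

theorem gapInf_le {s q : ℕ} (hq : 1 ≤ q) (hqs : q ≤ s) (hsn : s ≤ n)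
    (φ : Θ → Z → ℝ) (θ : Θ) (D : Fin n → Z) :
    gapInf φ s q D ≤ orderedLoss φ s q θ D - 1 / (n : ℝ) * ∑ i, φ θ (D i) := by
  rw [← sum_rankWeight_eq]
  refine ciInf_le ⟨0, ?_⟩ θ
  rintro _ ⟨θ, rfl⟩
  beta_reduce
  rw [sum_rankWeight_eq]
  exact sub_nonneg.2 (average_le_orderedLoss hq hqs hsn φ θ D)

theorem gapInf_nonneg {s q : ℕ} (hq : 1 ≤ q) (hqs : q ≤ s) (hsn : s ≤ n)
    (φ : Θ → Z → ℝ) (D : Fin n → Z) : 0 ≤ gapInf φ s q D :=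
  Real.iInf_nonneg fun θ => by
    rw [sum_rankWeight_eq]
    exact sub_nonneg.2 (average_le_orderedLoss hq hqs hsn φ θ D)

end OrderedLoss

namespace OrderedLoss

variable {Z : Type*} [MeasurableSpace Z] (μ : Measure Z) [IsProbabilityMeasure μ]

/-- Coordinatewise selection from two independent samples has the law of one sample. -/
theorem measurePreserving_select {ι : Type*} [Fintype ι] (p : ι → Prop) [DecidablePred p] :
    MeasurePreserving (fun x : (ι → Z) × (ι → Z) => fun i => if p i then x.1 i else x.2 i)
      ((Measure.pi fun _ => μ).prod (Measure.pi fun _ => μ)) (Measure.pi fun _ => μ) := by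
  have hm : Measurable (fun x : (ι → Z) × (ι → Z) => fun i => if p i then x.1 i else x.2 i) := by
    refine measurable_pi_lambda _ fun i => ?_
    by_cases hi : p i <;> simp only [hi, if_true, if_false] <;> fun_prop
  refine ⟨hm, (Measure.pi_eq fun t ht => ?_).symm⟩
  rw [Measure.map_apply hm (MeasurableSet.univ_pi ht)]
  have : (fun x : (ι → Z) × (ι → Z) => fun i => if p i then x.1 i else x.2 i) ⁻¹'
      Set.univ.pi t = (Set.univ.pi fun i => if p i then t i else Set.univ) ×ˢ
        (Set.univ.pi fun i => if p i then Set.univ else t i) := by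
    ext x
    simp only [Set.mem_preimage, Set.mem_pi, Set.mem_univ, true_imp_iff, Set.mem_prod,
      ← forall_and]
    refine forall_congr' fun i => ?_
    by_cases hi : p i <;> simp [hi]
  rw [this, Measure.prod_prod, Measure.pi_pi, Measure.pi_pi, ← Finset.prod_mul_distrib]
  refine Finset.prod_congr rfl fun i _ => ?_
  by_cases hi : p i <;> simp [hi]

/-- Resampling one coordinate preserves the product measure. -/
theorem measurePreserving_update {ι : Type*} [Fintype ι] [DecidableEq ι] (i : ι) :
    MeasurePreserving (fun x : (ι → Z) × Z => Function.update x.1 i x.2)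
      ((Measure.pi fun _ => μ).prod μ) (Measure.pi fun _ => μ) := by
  have hm : Measurable (fun x : (ι → Z) × Z => Function.update x.1 i x.2) := by
    refine measurable_pi_lambda _ fun j => ?_
    by_cases hj : j = i
    · subst hj; simpa using measurable_snd
    · simp only [Function.update_of_ne hj]; fun_prop
  refine ⟨hm, (Measure.pi_eq fun t ht => ?_).symm⟩
  rw [Measure.map_apply hm (MeasurableSet.univ_pi ht)]
  have : (fun x : (ι → Z) × Z => Function.update x.1 i x.2) ⁻¹' Set.univ.pi t =
      (Set.univ.pi (Function.update t i Set.univ)) ×ˢ t i := by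
    ext x
    simp only [Set.mem_preimage, Set.mem_pi, Set.mem_univ, true_imp_iff, Set.mem_prod]
    constructor
    · refine fun h => ⟨fun j => ?_, by simpa using h i⟩
      by_cases hj : j = i
      · subst hj; simp
      · simpa [hj] using h j
    · rintro ⟨h, hi⟩ j
      by_cases hj : j = i
      · subst hj; simpa using hi
      · simpa [hj] using h j
  rw [this, Measure.prod_prod, Measure.pi_pi, ← Finset.mul_prod_erase _ _ (Finset.mem_univ i),
    ← Finset.mul_prod_erase Finset.univ (fun j => μ (t j)) (Finset.mem_univ i)]
  simp only [Function.update_self, measure_univ, one_mul]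
  rw [mul_comm]
  congr 1
  refine Finset.prod_congr rfl fun j hj => ?_
  rw [Function.update_of_ne (Finset.ne_of_mem_erase hj)]

theorem measurePreserving_cons (n : ℕ) :
    MeasurePreserving (fun x : Z × (Fin n → Z) => (Fin.cons x.1 x.2 : Fin (n + 1) → Z))
      (μ.prod (Measure.pi fun _ => μ)) (Measure.pi fun _ => μ) := by
  convert (measurePreserving_piFinSuccAbove (fun _ : Fin (n + 1) => μ) 0).symm using 1
  ext x i
  simp [MeasurableEquiv.piFinSuccAbove, Fin.insertNthEquiv]

/-- Hoeffding's lemma for a variable two independent copies of which differ by at most `c`. -/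
theorem integral_exp_mul_le_of_ae_abs_sub_le {X : Z → ℝ} (hX : Measurable X) {B c : ℝ}
    (hB : ∀ z, |X z| ≤ B) (h : ∀ᵐ z ∂μ, ∀ᵐ w ∂μ, |X z - X w| ≤ c) (t : ℝ) :
    ∫ z, Real.exp (t * X z) ∂μ ≤ Real.exp (t * ∫ z, X z ∂μ + t ^ 2 * c ^ 2 / 8) := by
  have hbd : Filter.IsBoundedUnder (· ≤ ·) (ae μ) X :=
    Filter.isBoundedUnder_of ⟨B, fun z => (abs_le.1 (hB z)).2⟩
  have hcb : Filter.IsCoboundedUnder (· ≤ ·) (ae μ) X :=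
    Filter.IsBoundedUnder.isCoboundedUnder_le
      (Filter.isBoundedUnder_of ⟨-B, fun z => (abs_le.1 (hB z)).1⟩)
  have hmem : ∀ᵐ z ∂μ, X z ∈ Set.Icc (essSup X μ - c) (essSup X μ) := by
    filter_upwards [ae_le_essSup hbd, h] with z hz hz'
    refine ⟨?_, hz⟩
    have : essSup X μ ≤ X z + c := essSup_le_of_ae_le _ (by
      filter_upwards [hz'] with w hw
      have := (abs_le.1 hw).1
      linarith) hcb
    linarith
  have hG := (ProbabilityTheory.hasSubgaussianMGF_of_mem_Icc hX.aemeasurable hmem).mgf_le t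
  rw [ProbabilityTheory.mgf] at hG
  have e : ∀ z, Real.exp (t * X z) =
      Real.exp (t * (X z - ∫ z, X z ∂μ)) * Real.exp (t * ∫ z, X z ∂μ) := fun z => by
    rw [← Real.exp_add]; ring_nf
  simp_rw [e]
  rw [integral_mul_const, add_comm, Real.exp_add]
  gcongr
  refine hG.trans (Real.exp_le_exp.2 (le_of_eq ?_))
  simp only [sub_sub_cancel, NNReal.coe_pow, NNReal.coe_div, coe_nnnorm, Real.norm_eq_abs,
    NNReal.coe_ofNat, div_pow, sq_abs]
  ring

/-- Moment generating function bound under almost everywhere bounded differences. -/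
theorem integral_exp_mul_le_of_bounded_differences (t : ℝ) {n : ℕ} {f : (Fin n → Z) → ℝ}
    (hf : Measurable f) {B : ℝ} (hB : ∀ D, |f D| ≤ B) (c : Fin n → ℝ)
    (h : ∀ i, ∀ᵐ D ∂(Measure.pi fun _ => μ), ∀ᵐ w ∂μ, |f D - f (Function.update D i w)| ≤ c i) :
    ∫ D, Real.exp (t * f D) ∂(Measure.pi fun _ => μ) ≤
      Real.exp (t * ∫ D, f D ∂(Measure.pi fun _ => μ) + t ^ 2 * (∑ i, c i ^ 2) / 8) := by
  induction n with
  | zero =>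
    obtain ⟨a, rfl⟩ : ∃ a, f = fun _ => a :=
      ⟨f Fin.elim0, funext fun D => congrArg f (Subsingleton.elim _ _)⟩
    simp
  | succ n ih =>
    have hmp := measurePreserving_cons μ n
    have hcons := hmp.measurable
    have hfc : Measurable fun x : Z × (Fin n → Z) => f (Fin.cons x.1 x.2) := hf.comp hcons
    set π := Measure.pi fun _ : Fin n => μ
    set g : (Fin n → Z) → ℝ := fun D => ∫ z, f (Fin.cons z D) ∂μ with hg
    have hfz : ∀ D : Fin n → Z, Measurable fun z => f (Fin.cons z D) := fun D =>
      hfc.comp (measurable_id.prodMk measurable_const)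
    have hfi : ∀ D : Fin n → Z, Integrable (fun z => f (Fin.cons z D)) μ := fun D =>
      Integrable.of_bound (hfz D).aestronglyMeasurable B (ae_of_all _ fun z => hB _)
    have hgm : Measurable g :=
      (hfc.stronglyMeasurable.integral_prod_left').measurable
    have hgB : ∀ D, |g D| ≤ B := fun D => by
      simpa using norm_integral_le_of_norm_le_const (μ := μ) (C := B)
        (f := fun z => f (Fin.cons z D)) (ae_of_all _ fun z => hB _)
    have hfci : Integrable (fun x : Z × (Fin n → Z) => f (Fin.cons x.1 x.2)) (μ.prod π) :=
      Integrable.of_bound hfc.aestronglyMeasurable B (ae_of_all _ fun z => hB _)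
    have hexp : ∀ {a : ℝ}, |a| ≤ B → ‖Real.exp (t * a)‖ ≤ Real.exp (|t| * B) := fun {a} ha => by
      rw [Real.norm_eq_abs, Real.abs_exp]
      refine Real.exp_le_exp.2 ((le_abs_self _).trans ?_)
      rw [abs_mul]
      gcongr
    have hei : Integrable (fun x : Z × (Fin n → Z) => Real.exp (t * f (Fin.cons x.1 x.2)))
        (μ.prod π) :=
      Integrable.of_bound (hfc.const_mul t).exp.aestronglyMeasurable _ (ae_of_all _ fun z => hexp (hB _))
    have hgei : Integrable (fun D => Real.exp (t * g D)) π :=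
      Integrable.of_bound (by fun_prop) _ (ae_of_all _ fun z => hexp (hgB _))
    have hfint : ∫ D, f D ∂(Measure.pi fun _ : Fin (n + 1) => μ) = ∫ D, g D ∂π := by
      rw [← hmp.map_eq, integral_map hcons.aemeasurable hf.aestronglyMeasurable,
        integral_prod_symm _ hfci]
    have hfeint : ∫ D, Real.exp (t * f D) ∂(Measure.pi fun _ : Fin (n + 1) => μ) =
        ∫ D, ∫ z, Real.exp (t * f (Fin.cons z D)) ∂μ ∂π := by
      rw [← hmp.map_eq, integral_map hcons.aemeasurable
        (by fun_prop), integral_prod_symm _ hei]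
    have h' : ∀ i, ∀ᵐ D ∂π, ∀ᵐ z ∂μ, ∀ᵐ w ∂μ,
        |f (Fin.cons z D) - f (Function.update (Fin.cons z D) i w)| ≤ c i := fun i => by
      have h1 := hmp.quasiMeasurePreserving.ae (h i)
      exact Measure.ae_ae_of_ae_prod ((Measure.measurePreserving_swap (μ := π) (ν := μ)
        ).quasiMeasurePreserving.ae h1)
    have h0 : ∀ᵐ D ∂π, ∀ᵐ z ∂μ, ∀ᵐ w ∂μ, |f (Fin.cons z D) - f (Fin.cons w D)| ≤ c 0 := by
      simpa only [Fin.update_cons_zero] using h' 0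
    have hg0 : ∀ i : Fin n, ∀ᵐ D ∂π, ∀ᵐ w ∂μ,
        |g D - g (Function.update D i w)| ≤ c i.succ := fun i => by
      filter_upwards [h' i.succ] with D hD
      simp only [← Fin.cons_update] at hD
      have hmu : Measurable fun x : Z × Z => f (Fin.cons x.1 (Function.update D i x.2)) :=
        hfc.comp (measurable_fst.prodMk ((measurable_update D).comp measurable_snd))
      have hmset : MeasurableSet {x : Z × Z |
          |f (Fin.cons x.1 D) - f (Fin.cons x.1 (Function.update D i x.2))| ≤ c i.succ} :=
        measurableSet_le ((((hfz D).comp measurable_fst).sub hmu).norm) measurable_const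
      rw [Measure.ae_ae_comm hmset] at hD
      filter_upwards [hD] with w hw
      rw [hg]
      simp only
      rw [← integral_sub (hfi _) (hfi _)]
      simpa using norm_integral_le_of_norm_le_const (μ := μ) (C := c i.succ)
        (f := fun z => f (Fin.cons z D) - f (Fin.cons z (Function.update D i w))) hw
    rw [hfeint, hfint, Fin.sum_univ_succ]
    calc ∫ D, ∫ z, Real.exp (t * f (Fin.cons z D)) ∂μ ∂π
        ≤ ∫ D, Real.exp (t * g D) * Real.exp (t ^ 2 * c 0 ^ 2 / 8) ∂π := by
          refine integral_mono_ae hei.integral_prod_right (hgei.mul_const _) ?_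
          filter_upwards [h0] with D hD
          rw [← Real.exp_add]
          exact integral_exp_mul_le_of_ae_abs_sub_le μ (hfz D) (fun z => hB _) hD t
      _ ≤ Real.exp (t * ∫ D, g D ∂π + t ^ 2 * (∑ i : Fin n, c i.succ ^ 2) / 8) *
            Real.exp (t ^ 2 * c 0 ^ 2 / 8) := by
          rw [integral_mul_const]
          gcongr
          exact ih hgm hgB _ hg0
      _ = _ := by rw [← Real.exp_add]; ring_nf

/-- **McDiarmid's inequality** for a bounded, almost everywhere measurable function. -/
theorem measure_ge_le_of_bounded_differences {n : ℕ} {f : (Fin n → Z) → ℝ}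
    (hf : AEMeasurable f (Measure.pi fun _ => μ)) {B : ℝ} (hB : ∀ D, |f D| ≤ B) (c : Fin n → ℝ)
    (h : ∀ i D w, |f D - f (Function.update D i w)| ≤ c i) (hc : 0 < ∑ i, c i ^ 2)
    {ε : ℝ} (hε : 0 ≤ ε) :
    (Measure.pi fun _ => μ).real {D | (∫ D, f D ∂(Measure.pi fun _ => μ)) + ε ≤ f D} ≤
      Real.exp (-(2 * ε ^ 2) / ∑ i, c i ^ 2) := by
  set π := Measure.pi fun _ : Fin n => μ
  obtain ⟨D₀⟩ : Nonempty (Fin n → Z) := π.nonempty_of_neZero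
  have hB0 : 0 ≤ B := (abs_nonneg _).trans (hB D₀)
  set g : (Fin n → Z) → ℝ := fun D => max (-B) (min B (hf.mk f D)) with hg
  have hgm : Measurable g := measurable_const.max (measurable_const.min hf.measurable_mk)
  have hfg : f =ᵐ[π] g := by
    filter_upwards [hf.ae_eq_mk] with D hD
    have := abs_le.1 (hB D)
    rw [hg]
    simp only
    rw [← hD, min_eq_right this.2, max_eq_right this.1]
  have hgB : ∀ D, |g D| ≤ B := fun D =>
    abs_le.2 ⟨le_max_left _ _, max_le (by linarith) (min_le_left _ _)⟩
  have hgd : ∀ i, ∀ᵐ D ∂π, ∀ᵐ w ∂μ, |g D - g (Function.update D i w)| ≤ c i := fun i => by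
    have h1 := Measure.ae_ae_of_ae_prod
      ((measurePreserving_update μ i).quasiMeasurePreserving.ae hfg)
    filter_upwards [hfg, h1] with D hD hD'
    filter_upwards [hD'] with w hw
    rw [← hD, ← hw]
    exact h i D w
  set S := ∑ i, c i ^ 2
  set t := 4 * ε / S with ht
  have ht0 : 0 ≤ t := by positivity
  have hmgf := integral_exp_mul_le_of_bounded_differences μ t hgm hgB c hgd
  have hint : Integrable (fun D => Real.exp (t * g D)) π :=
    Integrable.of_bound (by fun_prop) (Real.exp (t * B)) (ae_of_all _ fun D => by
      rw [Real.norm_eq_abs, Real.abs_exp]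
      exact Real.exp_le_exp.2 (mul_le_mul_of_nonneg_left (abs_le.1 (hgB D)).2 ht0))
  have hE : ∫ D, f D ∂π = ∫ D, g D ∂π := integral_congr_ae hfg
  have hset : {D | (∫ D, f D ∂π) + ε ≤ f D} =ᵐ[π] {D | (∫ D, g D ∂π) + ε ≤ g D} := by
    filter_upwards [hfg] with D hD
    exact congrArg₂ (fun a b => a + ε ≤ b) hE hD
  rw [measureReal_congr hset]
  refine (ProbabilityTheory.measure_ge_le_exp_mul_mgf _ ht0 hint).trans ?_
  rw [ProbabilityTheory.mgf]
  refine (mul_le_mul_of_nonneg_left hmgf (Real.exp_pos _).le).trans ?_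
  rw [← Real.exp_add]
  refine Real.exp_le_exp.2 (le_of_eq ?_)
  rw [ht]
  field_simp
  ring

end OrderedLoss

namespace OrderedLoss

variable {Z Θ : Type*}

theorem average_sub_average_eq {n : ℕ} (φ : Θ → Z → ℝ) (ξ : Fin n → ℤˣ) (θ : Θ)
    (D D' : Fin n → Z) :
    1 / (n : ℝ) * ∑ i, φ θ (D' i) - 1 / (n : ℝ) * ∑ i, φ θ (D i) =
      signedAverage φ ξ (fun i => if ξ i ≠ 1 then D i else D' i) θ +
        signedAverage φ (-ξ) (fun i => if ξ i = 1 then D i else D' i) θ := by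
  simp only [signedAverage]
  rw [← mul_sub, ← mul_add, ← Finset.sum_sub_distrib, ← Finset.sum_add_distrib]
  congr 1
  refine Finset.sum_congr rfl fun i _ => ?_
  rcases Int.units_eq_one_or (ξ i) with h | h <;> simp [h] <;> ring

theorem integral_comp_of_measurePreserving {α β : Type*} [MeasurableSpace α] [MeasurableSpace β]
    {ν : Measure α} {ρ : Measure β} {g : α → β} (hg : MeasurePreserving g ν ρ) {f : β → ℝ}
    (hf : AEStronglyMeasurable f ρ) : ∫ x, f (g x) ∂ν = ∫ y, f y ∂ρ := by
  rw [← hg.map_eq] at hf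
  rw [← integral_map hg.measurable.aemeasurable hf, hg.map_eq]

variable [MeasurableSpace Z] (μ : Measure Z) [IsProbabilityMeasure μ]

theorem integral_average {n : ℕ} (hn : n ≠ 0) {f : Z → ℝ} (hf : Integrable f μ) :
    ∫ D, 1 / (n : ℝ) * ∑ i : Fin n, f (D i) ∂(Measure.pi fun _ : Fin n => μ) =
      ∫ z, f z ∂μ := by
  have hmp := fun i => measurePreserving_eval (fun _ : Fin n => μ) i
  have hi : ∀ i : Fin n, ∫ D, f (D i) ∂(Measure.pi fun _ : Fin n => μ) = ∫ z, f z ∂μ :=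
    fun i => integral_comp_of_measurePreserving (hmp i) hf.aestronglyMeasurable
  have hint : ∀ i : Fin n, Integrable (fun D : Fin n → Z => f (D i))
      (Measure.pi fun _ : Fin n => μ) := fun i => (hmp i).integrable_comp_of_integrable hf
  rw [integral_const_mul, integral_finsetSum _ fun i _ => hint i]
  simp only [hi, Finset.sum_const, Finset.card_univ, Fintype.card_fin, nsmul_eq_mul]
  field_simp

variable {μ} in
/-- Symmetrization with a fixed sign vector. -/
theorem integral_iSup_le_of_signs [Nonempty Θ] {φ : Θ → Z → ℝ}
    (hφ : ∀ θ, Integrable (φ θ) μ) {n s q : ℕ} (hq : 1 ≤ q) (hqs : q ≤ s) (hsn : s ≤ n)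
    (hRfin : ∀ ξ : Fin n → ℤˣ, ∀ᵐ D ∂(Measure.pi fun _ : Fin n => μ),
      BddAbove (Set.range fun θ : Θ => signedAverage φ ξ D θ))
    (hRint : ∀ ξ : Fin n → ℤˣ, Integrable (fun D : Fin n → Z => ⨆ θ : Θ, signedAverage φ ξ D θ)
      (Measure.pi fun _ : Fin n => μ))
    (hQ : Integrable (fun D : Fin n → Z => gapInf φ s q D) (Measure.pi fun _ : Fin n => μ))
    (hΦ : Integrable (fun D : Fin n → Z => ⨆ θ : Θ, ((∫ z, φ θ z ∂μ) - orderedLoss φ s q θ D))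
      (Measure.pi fun _ : Fin n => μ)) (ξ : Fin n → ℤˣ) :
    ∫ D, ⨆ θ : Θ, ((∫ z, φ θ z ∂μ) - orderedLoss φ s q θ D) ∂(Measure.pi fun _ : Fin n => μ) ≤
      ∫ D, ⨆ θ : Θ, signedAverage φ ξ D θ ∂(Measure.pi fun _ : Fin n => μ) +
      ∫ D, ⨆ θ : Θ, signedAverage φ (-ξ) D θ ∂(Measure.pi fun _ : Fin n => μ) -
      gapQ μ φ n s q := by
  have hn : n ≠ 0 := by lia
  set π := Measure.pi fun _ : Fin n => μ
  set F : (Fin n → ℤˣ) → (Fin n → Z) → ℝ := fun ξ D => ⨆ θ : Θ, signedAverage φ ξ D θ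
  have hmp₁ := measurePreserving_select μ fun i => ξ i ≠ 1
  have hmp₂ := measurePreserving_select μ fun i => ξ i = 1
  have hG₁ := hmp₁.integrable_comp_of_integrable (hRint ξ)
  have hG₂ := hmp₂.integrable_comp_of_integrable (hRint (-ξ))
  set G₁ : (Fin n → Z) × (Fin n → Z) → ℝ :=
    fun x => F ξ fun i => if ξ i ≠ 1 then x.1 i else x.2 i
  set G₂ : (Fin n → Z) × (Fin n → Z) → ℝ :=
    fun x => F (-ξ) fun i => if ξ i = 1 then x.1 i else x.2 i
  change Integrable G₁ (π.prod π) at hG₁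
  change Integrable G₂ (π.prod π) at hG₂
  have hI₁ : ∫ x, G₁ x ∂(π.prod π) = ∫ D, F ξ D ∂π :=
    integral_comp_of_measurePreserving hmp₁ (hRint ξ).aestronglyMeasurable
  have hI₂ : ∫ x, G₂ x ∂(π.prod π) = ∫ D, F (-ξ) D ∂π :=
    integral_comp_of_measurePreserving hmp₂ (hRint (-ξ)).aestronglyMeasurable
  have hle : ∀ᵐ x ∂(π.prod π), ∀ θ : Θ,
      1 / (n : ℝ) * ∑ i, φ θ (x.2 i) - 1 / (n : ℝ) * ∑ i, φ θ (x.1 i) ≤ G₁ x + G₂ x := by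
    filter_upwards [hmp₁.quasiMeasurePreserving.ae (hRfin ξ),
      hmp₂.quasiMeasurePreserving.ae (hRfin (-ξ))] with x h₁ h₂ θ
    rw [average_sub_average_eq φ ξ]
    exact add_le_add (le_ciSup h₁ θ) (le_ciSup h₂ θ)
  have hmain : ∀ᵐ D ∂π, (⨆ θ : Θ, ((∫ z, φ θ z ∂μ) - orderedLoss φ s q θ D)) ≤
      (∫ D', (G₁ (D, D') + G₂ (D, D')) ∂π) - gapInf φ s q D := by
    filter_upwards [Measure.ae_ae_of_ae_prod hle, (hG₁.add hG₂).prod_right_ae] with D hD hDi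
    refine ciSup_le fun θ => ?_
    have hav : Integrable (fun D' : Fin n → Z => 1 / (n : ℝ) * ∑ i, φ θ (D' i)) π :=
      (integrable_finsetSum _ fun i _ => (measurePreserving_eval
        (fun _ : Fin n => μ) i).integrable_comp_of_integrable (hφ θ)).const_mul _
    have h1 : ∫ D' : Fin n → Z, (1 / (n : ℝ) * ∑ i, φ θ (D' i) - 1 / (n : ℝ) * ∑ i, φ θ (D i)) ∂π
        ≤ ∫ D', (G₁ (D, D') + G₂ (D, D')) ∂π := by
      refine integral_mono_ae (hav.sub (integrable_const _)) hDi ?_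
      filter_upwards [hD] with D' hD' using hD' θ
    rw [integral_sub hav (integrable_const _), integral_average μ hn (hφ θ)] at h1
    simp only [integral_const, probReal_univ, one_smul] at h1
    have h2 := gapInf_le hq hqs hsn φ θ D
    linarith
  have hGi : Integrable (fun D => ∫ D', (G₁ (D, D') + G₂ (D, D')) ∂π) π :=
    (hG₁.add hG₂).integral_prod_left
  refine (integral_mono_ae hΦ (hGi.sub hQ) hmain).trans (le_of_eq ?_)
  have hG : ∫ D, ∫ D', (G₁ (D, D') + G₂ (D, D')) ∂π ∂π =
      ∫ x, G₁ x ∂(π.prod π) + ∫ x, G₂ x ∂(π.prod π) :=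
    (integral_prod _ (hG₁.add hG₂)).symm.trans (integral_add hG₁ hG₂)
  rw [hI₁, hI₂] at hG
  simp only [Pi.sub_apply]
  rw [integral_sub hGi hQ, hG]
  rfl

variable {μ} in
theorem integral_iSup_le [Nonempty Θ] {φ : Θ → Z → ℝ}
    (hφ : ∀ θ, Integrable (φ θ) μ) {n s q : ℕ} (hq : 1 ≤ q) (hqs : q ≤ s) (hsn : s ≤ n)
    (hRfin : ∀ ξ : Fin n → ℤˣ, ∀ᵐ D ∂(Measure.pi fun _ : Fin n => μ),
      BddAbove (Set.range fun θ : Θ => signedAverage φ ξ D θ))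
    (hRint : ∀ ξ : Fin n → ℤˣ, Integrable (fun D : Fin n → Z => ⨆ θ : Θ, signedAverage φ ξ D θ)
      (Measure.pi fun _ : Fin n => μ))
    (hQ : Integrable (fun D : Fin n → Z => gapInf φ s q D) (Measure.pi fun _ : Fin n => μ))
    (hΦ : Integrable (fun D : Fin n → Z => ⨆ θ : Θ, ((∫ z, φ θ z ∂μ) - orderedLoss φ s q θ D))
      (Measure.pi fun _ : Fin n => μ)) :
    ∫ D, ⨆ θ : Θ, ((∫ z, φ θ z ∂μ) - orderedLoss φ s q θ D) ∂(Measure.pi fun _ : Fin n => μ) ≤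
      2 * rademacherComplexity μ φ n - gapQ μ φ n s q := by
  have h := Finset.sum_le_sum fun ξ (_ : ξ ∈ Finset.univ) =>
    integral_iSup_le_of_signs hφ hq hqs hsn hRfin hRint hQ hΦ ξ
  have hneg := Equiv.sum_comp (Equiv.neg (Fin n → ℤˣ)) (fun ξ : Fin n → ℤˣ =>
    ∫ D, ⨆ θ : Θ, signedAverage φ ξ D θ ∂(Measure.pi fun _ : Fin n => μ))
  simp only [Equiv.neg_apply] at hneg
  rw [Finset.sum_sub_distrib, Finset.sum_add_distrib, hneg, ← integral_finsetSum _ fun ξ _ => hRint ξ] at h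
  have hcard : ((Fintype.card (Fin n → ℤˣ) : ℕ) : ℝ) = 2 ^ n := by simp
  simp only [Finset.sum_const, Finset.card_univ, nsmul_eq_mul, hcard] at h
  have h2 : (0 : ℝ) < 2 ^ n := by positivity
  rw [rademacherComplexity, integral_const_mul]
  refine le_of_mul_le_mul_left (h.trans (le_of_eq ?_)) h2
  field_simp
  ring

theorem abs_integral_sub_le {f : Z → ℝ} {M : ℝ} (hf : Integrable f μ)
    (hM : ∀ z z', |f z - f z'| ≤ M) (z : Z) : |(∫ w, f w ∂μ) - f z| ≤ M := by
  have h := norm_integral_le_of_norm_le_const (μ := μ) (C := M) (f := fun w => f w - f z)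
    (ae_of_all _ fun w => hM w z)
  rw [integral_sub hf (integrable_const _)] at h
  simpa using h

end OrderedLoss

open OrderedLoss in
/-- Generalization bound for the ordered empirical loss. That the Rademacher supremum is an
integrable function of `(ξ, D)` is expressed, for every sign vector `ξ`, by `hRfin` (the supremum
is finite for almost every `D`, so that `⨆` is the true supremum there) and `hRint`. The supremum
in `hΦ` and the infimum in `hQ` are always over bounded sets, because of `hM_osc`. -/
theorem stmt_19
    {Z : Type*} [MeasurableSpace Z] (μ : Measure Z) [IsProbabilityMeasure μ]
    {Θ : Type*} [Nonempty Θ]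
    (M : ℝ) (hM : 0 ≤ M)
    (φ : Θ → Z → ℝ)
    (hφ_meas : ∀ θ, Measurable (φ θ))
    (hφ_bdd : ∀ θ, ∃ C : ℝ, ∀ z, |φ θ z| ≤ C)
    (hM_osc : ∀ θ z z', |φ θ z - φ θ z'| ≤ M)
    (n s q : ℕ) (hq : 1 ≤ q) (hqs : q ≤ s) (hsn : s ≤ n)
    (hRfin : ∀ ξ : Fin n → ℤˣ, ∀ᵐ D ∂(Measure.pi fun _ : Fin n => μ),
      BddAbove (Set.range fun θ : Θ => OrderedLoss.signedAverage φ ξ D θ))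
    (hRint : ∀ ξ : Fin n → ℤˣ,
      Integrable (fun D : Fin n → Z => ⨆ θ : Θ, OrderedLoss.signedAverage φ ξ D θ)
        (Measure.pi fun _ : Fin n => μ))
    (hQ : Integrable (fun D : Fin n → Z => OrderedLoss.gapInf φ s q D)
      (Measure.pi fun _ : Fin n => μ))
    (hΦ : Integrable
      (fun D : Fin n → Z => ⨆ θ : Θ, ((∫ z, φ θ z ∂μ) - OrderedLoss.orderedLoss φ s q θ D))
      (Measure.pi fun _ : Fin n => μ)) :
    0 ≤ OrderedLoss.gapQ μ φ n s q ∧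
      ∀ δ : ℝ, 0 < δ → δ < 1 →
        ENNReal.ofReal (1 - δ) ≤
          (Measure.pi fun _ : Fin n => μ) {D : Fin n → Z | ∀ θ : Θ,
            ∫ z, φ θ z ∂μ ≤
              OrderedLoss.orderedLoss φ s q θ D
                + 2 * OrderedLoss.rademacherComplexity μ φ n
                + (M * (s : ℝ) / (q : ℝ)) * Real.sqrt (Real.log (1 / δ) / (2 * (n : ℝ)))
                - OrderedLoss.gapQ μ φ n s q} := by
  have hφ : ∀ θ, Integrable (φ θ) μ := fun θ => by
    obtain ⟨C, hC⟩ := hφ_bdd θ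
    exact Integrable.of_bound (hφ_meas θ).aestronglyMeasurable C (ae_of_all _ hC)
  refine ⟨integral_nonneg fun D => gapInf_nonneg hq hqs hsn φ D, fun δ hδ0 hδ1 => ?_⟩
  have hq0 : (0 : ℝ) < q := by exact_mod_cast hq
  have hs0 : (0 : ℝ) < s := by exact_mod_cast (by lia : 0 < s)
  have hn0 : (0 : ℝ) < n := by exact_mod_cast (by lia : 0 < n)
  have hsym := integral_iSup_le hφ hq hqs hsn hRfin hRint hQ hΦ
  set π := Measure.pi fun _ : Fin n => μ
  set Φ : (Fin n → Z) → ℝ :=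
    fun D => ⨆ θ : Θ, ((∫ z, φ θ z ∂μ) - orderedLoss φ s q θ D)
  set ε := M * (s : ℝ) / (q : ℝ) * √(Real.log (1 / δ) / (2 * (n : ℝ))) with hε
  have habs : ∀ D θ, |(∫ z, φ θ z ∂μ) - orderedLoss φ s q θ D| ≤ M := fun D θ =>
    abs_sub_orderedLoss_le (abs_integral_sub_le μ (hφ θ) (hM_osc θ)) hq hqs hsn D
  have hbdd : ∀ D : Fin n → Z,
      BddAbove (Set.range fun θ : Θ => (∫ z, φ θ z ∂μ) - orderedLoss φ s q θ D) := fun D =>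
    ⟨M, by rintro _ ⟨θ, rfl⟩; exact (abs_le.1 (habs D θ)).2⟩
  have hΦB : ∀ D, |Φ D| ≤ M := fun D => by
    obtain ⟨θ⟩ := ‹Nonempty Θ›
    exact abs_le.2 ⟨(abs_le.1 (habs D θ)).1.trans (le_ciSup (hbdd D) θ),
      ciSup_le fun θ => (abs_le.1 (habs D θ)).2⟩
  have hsub : ∀ D, Φ D ≤ (∫ D, Φ D ∂π) + ε → ∀ θ : Θ, ∫ z, φ θ z ∂μ ≤
      orderedLoss φ s q θ D + 2 * rademacherComplexity μ φ n + ε - gapQ μ φ n s q :=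
    fun D hD θ => by
    have := le_ciSup (hbdd D) θ
    linarith
  rcases hM.eq_or_lt with rfl | hM
  · have h0 : ∀ D, Φ D = 0 := fun D => abs_nonpos_iff.1 (hΦB D)
    have huniv : {D : Fin n → Z | ∀ θ : Θ, ∫ z, φ θ z ∂μ ≤ orderedLoss φ s q θ D +
        2 * rademacherComplexity μ φ n + ε - gapQ μ φ n s q} = Set.univ :=
      Set.eq_univ_of_forall fun D => hsub D (by simp [h0, hε])
    rw [huniv, measure_univ]
    exact ENNReal.ofReal_le_one.2 (by linarith)
  have hdiff : ∀ (D D' : Fin n → Z) (i : Fin n), (∀ j ≠ i, D j = D' j) →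
      Φ D ≤ Φ D' + M * s / (q * n) := fun D D' i h => ciSup_le fun θ => by
    have h1 := le_ciSup (hbdd D') θ
    have h2 := orderedLoss_sub_le (hM_osc θ) hq hqs hsn (fun j hj => (h j hj).symm)
    linarith
  have hlog : 0 ≤ Real.log (1 / δ) := Real.log_nonneg (by rw [le_div_iff₀ hδ0]; linarith)
  have hmc := measure_ge_le_of_bounded_differences μ hΦ.aemeasurable hΦB
    (fun _ => M * s / (q * n)) (fun i D w => by
      have h1 := hdiff D (Function.update D i w) i fun j hj => (Function.update_of_ne hj ..).symm
      have h2 := hdiff (Function.update D i w) D i fun j hj => Function.update_of_ne hj ..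
      exact abs_sub_le_iff.2 ⟨by linarith, by linarith⟩)
    (Finset.sum_pos (fun _ _ => by positivity) ⟨⟨0, by lia⟩, Finset.mem_univ _⟩)
    (ε := ε) (by positivity)
  have hexp : Real.exp (-(2 * ε ^ 2) / ∑ _ : Fin n, (M * s / (q * n)) ^ 2) = δ := by
    rw [hε, mul_pow, Real.sq_sqrt (by positivity)]
    simp only [Finset.sum_const, Finset.card_univ, Fintype.card_fin, nsmul_eq_mul]
    rw [show -(2 * ((M * (s : ℝ) / q) ^ 2 * (Real.log (1 / δ) / (2 * n)))) /
      (n * (M * s / (q * n)) ^ 2) = -Real.log (1 / δ) by field_simp, one_div, Real.log_inv,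
      neg_neg, Real.exp_log hδ0]
  rw [hexp] at hmc
  set A := {D | (∫ D, Φ D ∂π) + ε ≤ Φ D}
  have hA : π A ≤ ENNReal.ofReal δ := by
    rw [← ofReal_measureReal]
    exact ENNReal.ofReal_le_ofReal hmc
  calc ENNReal.ofReal (1 - δ) = 1 - ENNReal.ofReal δ := by
        rw [ENNReal.ofReal_sub _ hδ0.le, ENNReal.ofReal_one]
    _ ≤ 1 - π A := tsub_le_tsub_left hA _
    _ ≤ π Aᶜ := by
        rw [tsub_le_iff_left, ← measure_univ (μ := π), ← Set.union_compl_self A]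
        exact measure_union_le _ _
    _ ≤ _ := measure_mono fun D hD => hsub D (le_of_lt (not_le.1 hD))
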